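/- Discrete time shifts: under these hypotheses, for all n ∈ ℤ, C_1·M_n − M_n·C_1 = (1−q)·M_{n+1} and (A^{−1}·C_r)·M_n − M_n·(A^{−1}·C_r) = (1−q^{−1})·M_{n-1}, where M_n := M_{1,n}. -/

import Mathlib

/-- ξ_{α,n} := M_{α,n} · M_{α,n+1}⁻¹ -/
def xiv {R : Type*} [Ring R] (M Mi : ℕ → ℤ → R) (α : ℕ) (n : ℤ) : R :=
  M α n * Mi α (n + 1)

/-- ξ_{α,n}⁻¹ = M_{α,n+1} · M_{α,n}⁻¹ -/
def xivInv {R : Type*} [Ring R] (M Mi : ℕ → ℤ → R) (α : ℕ) (n : ℤ) : R :=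
  M α (n + 1) * Mi α n

/-- x_{α,n} := ξ_{α,n}⁻¹ · ξ_{α-1,n} -/
def xv {R : Type*} [Ring R] (M Mi : ℕ → ℤ → R) (α : ℕ) (n : ℤ) : R :=
  xivInv M Mi α n * xiv M Mi (α - 1) n

/-- The Miura coefficient C_{m,n} = Σ_{r+1 ≥ α₁ > ⋯ > α_m ≥ 1}
∏_{j=1}^m x_{α_j, n+(r+1-α_j)-(j-1)} (ordered product, j increasing left to right). -/
def CMiura {R : Type*} [Ring R] (M Mi : ℕ → ℤ → R) (r : ℕ) (m : ℕ) (n : ℤ) : R :=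
  ∑ S ∈ Finset.powersetCard m (Finset.Icc 1 (r + 1)),
    (((S.sort (· ≤ ·)).reverse.zipIdx).map
      (fun ji => xv M Mi ji.1 (n + ((r : ℤ) + 1 - (ji.1 : ℤ)) - (ji.2 : ℤ)))).prod

/-!
Put `ξ_{α,n} = M_{α,n} M_{α,n+1}⁻¹`. The M-system and the commutation relations combine into a
noncommutative Toda-type equation

  `(ξ_{α,n} - ξ_{α,n-1}) ξ_{α-1,n}⁻¹ = ξ_{α+1,n} (ξ_{α,n}⁻¹ - ξ_{α,n+1}⁻¹)`,  `1 ≤ α ≤ r`,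

while the rows `α = 0` and `α = r + 1` of `ξ` do not depend on `n`. By this equation the time
differences of the two sums `∑_α ξ_{α,s-α}⁻¹ ξ_{α-1,s-α}` and `∑_α ξ_{α,n} ξ_{α-1,n+1}⁻¹`
telescope to zero, so both are conserved, and `C_1` and `A⁻¹ C_r` are values of them. To commute
them with `M_n`, evaluate them at a time close to `n`: there `M_n` `q`-commutes with the same
exponent with every `ξ_{α,k}`, `α ≥ 1`, that occurs, hence commutes with all summands except the one
with `α = 1`, where `ξ_{0,k} = 1`; that summand contributes the shift `M_{n ± 1}`.
-/

section QCommute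

variable {G : Type*} [Group G] {q g x y : G} {k l : ℤ}

/-- `g` and `x` commute up to the power `q ^ k`: `g * x = q ^ k * x * g`. It is phrased through
`SemiconjBy` in order to inherit its calculus. -/
def QCommute (q : G) (k : ℤ) (g x : G) : Prop :=
  SemiconjBy g x (q ^ k * x)

namespace QCommute

theorem mul_right (hq : q ∈ Subgroup.center G) (hx : QCommute q k g x) (hy : QCommute q l g y) :
    QCommute q (k + l) g (x * y) := by
  have hcomm : x * q ^ l = q ^ l * x := Subgroup.mem_center_iff.mp (zpow_mem hq l) x
  have hmul : q ^ k * x * (q ^ l * y) = q ^ (k + l) * (x * y) := by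
    rw [mul_assoc, ← mul_assoc x, hcomm, zpow_add]
    group
  rw [QCommute, ← hmul]
  exact SemiconjBy.mul_right hx hy

theorem inv_right (hq : q ∈ Subgroup.center G) (hx : QCommute q k g x) :
    QCommute q (-k) g x⁻¹ := by
  have hcomm : x⁻¹ * q ^ (-k) = q ^ (-k) * x⁻¹ := Subgroup.mem_center_iff.mp (zpow_mem hq _) _
  have hinv : (q ^ k * x)⁻¹ = q ^ (-k) * x⁻¹ := by rw [mul_inv_rev, ← zpow_neg, hcomm]
  rw [QCommute, ← hinv]
  exact SemiconjBy.inv_right_iff.mpr hx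

theorem symm (h : QCommute q k g x) : QCommute q (-k) x g := by
  have hgx : g * x = q ^ k * x * g := h
  rw [QCommute, SemiconjBy, mul_assoc, hgx]
  group

theorem commute (h : QCommute q 0 g x) : Commute g x := by
  simpa [QCommute, Commute] using h

end QCommute

end QCommute

section TodaLattice

variable {R : Type*} [Ring R] {r : ℕ} {ξ : ℕ → ℤ → Rˣ}

/-- A solution `ξ` of the noncommutative discrete Toda-type equation in rows `1, …, r`, with
boundary rows `0` and `r + 1` constant in time. The interior rows are indexed by `k + 1` with
`k < r`; rows above `r + 1` are irrelevant. -/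
structure IsDiscreteToda (r : ℕ) (ξ : ℕ → ℤ → Rˣ) : Prop where
  bottom : ∀ m n, ξ 0 m = ξ 0 n
  top : ∀ m n, ξ (r + 1) m = ξ (r + 1) n
  toda : ∀ k n, k < r →
    ((ξ (k + 1) n : R) - ξ (k + 1) (n - 1)) * ↑(ξ k n)⁻¹ =
      ξ (k + 2) n * (↑(ξ (k + 1) n)⁻¹ - ↑(ξ (k + 1) (n + 1))⁻¹)

/-- The first Hamiltonian `∑_α x_{α,s-α+1}` of the lattice, where
`x_{α,n} = ξ_{α,n}⁻¹ ξ_{α-1,n}`; the summation index is `k = α - 1`. -/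
def todaHamiltonian (r : ℕ) (ξ : ℕ → ℤ → Rˣ) (s : ℤ) : R :=
  ∑ k ∈ Finset.range (r + 1), ((ξ (k + 1) (s - k))⁻¹ * ξ k (s - k) : Rˣ)

/-- The last nontrivial Hamiltonian of the lattice, up to the boundary factors
`ξ_{r+1}⁻¹` on the left and `ξ_0` on the right. -/
def todaDualHamiltonian (r : ℕ) (ξ : ℕ → ℤ → Rˣ) (n : ℤ) : R :=
  ∑ k ∈ Finset.range (r + 1), (ξ (k + 1) n * (ξ k (n + 1))⁻¹ : Rˣ)

namespace IsDiscreteToda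

theorem sub_mul_inv_eq (h : IsDiscreteToda r ξ) {k : ℕ} (hk : k ≤ r) (n : ℤ) :
    ((ξ (k + 1) n : R) - ξ (k + 1) (n - 1)) * ↑(ξ k n)⁻¹ =
      ξ (k + 2) n * (↑(ξ (k + 1) n)⁻¹ - ↑(ξ (k + 1) (n + 1))⁻¹) := by
  rcases hk.lt_or_eq with hlt | rfl
  · exact h.toda k n hlt
  · simp [h.top n (n - 1), h.top (n + 1) (n - 1)]

theorem inv_mul_sub_eq (h : IsDiscreteToda r ξ) {k : ℕ} (hk : k ≤ r) (n : ℤ) :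
    ↑(ξ (k + 2) n)⁻¹ * ((ξ (k + 1) n : R) - ξ (k + 1) (n - 1)) =
      (↑(ξ (k + 1) n)⁻¹ - ↑(ξ (k + 1) (n + 1))⁻¹) * ξ k n := by
  rw [Units.inv_mul_eq_iff_eq_mul, ← mul_assoc, ← h.sub_mul_inv_eq hk n, Units.inv_mul_cancel_right]

theorem todaHamiltonian_periodic (h : IsDiscreteToda r ξ) :
    Function.Periodic (todaHamiltonian r ξ) 1 := by
  intro s
  let flux : ℕ → R := fun k ↦
    ↑(ξ (k + 1) (s + 1 - k))⁻¹ * ((ξ k (s + 1 - k) : R) - ξ k (s - k))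
  have hflux : ∀ k ∈ Finset.range (r + 1),
      (((ξ (k + 1) (s + 1 - k))⁻¹ * ξ k (s + 1 - k) : Rˣ) : R) -
        ((ξ (k + 1) (s - k))⁻¹ * ξ k (s - k) : Rˣ) = flux k - flux (k + 1) := by
    intro k hk
    have htoda := h.inv_mul_sub_eq (Finset.mem_range_succ_iff.mp hk) (s - k)
    simp only [flux, Nat.cast_add_one, add_sub_add_right_eq_sub,
      show s - ((k : ℤ) + 1) = s - k - 1 by ring, htoda, show s + 1 - (k : ℤ) = s - k + 1 by ring]
    push_cast
    noncomm_ring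
  rw [← sub_eq_zero, todaHamiltonian, todaHamiltonian, ← Finset.sum_sub_distrib,
    Finset.sum_congr rfl hflux, Finset.sum_range_sub']
  simp [flux, h.bottom (s + 1) s, h.top (s - r) (s - (r + 1))]

theorem todaDualHamiltonian_periodic (h : IsDiscreteToda r ξ) :
    Function.Periodic (todaDualHamiltonian r ξ) 1 := by
  intro s
  let flux : ℕ → R := fun k ↦
    (ξ (k + 1) (s + 1) : R) * (↑(ξ k (s + 1))⁻¹ - ↑(ξ k (s + 1 + 1))⁻¹)
  have hflux : ∀ k ∈ Finset.range (r + 1),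
      ((ξ (k + 1) (s + 1) * (ξ k (s + 1 + 1))⁻¹ : Rˣ) : R) -
        (ξ (k + 1) s * (ξ k (s + 1))⁻¹ : Rˣ) = flux (k + 1) - flux k := by
    intro k hk
    have htoda := h.sub_mul_inv_eq (Finset.mem_range_succ_iff.mp hk) (s + 1)
    simp only [flux, ← htoda, add_sub_cancel_right]
    push_cast
    noncomm_ring
  rw [← sub_eq_zero, todaDualHamiltonian, todaDualHamiltonian, ← Finset.sum_sub_distrib,
    Finset.sum_congr rfl hflux, Finset.sum_range_sub]
  simp [flux, h.bottom (s + 1) (s + 1 + 1), h.top (s + 1) (s + 1 + 1)]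

theorem todaHamiltonian_eq (h : IsDiscreteToda r ξ) (s t : ℤ) :
    todaHamiltonian r ξ s = todaHamiltonian r ξ t := by
  simpa using (h.todaHamiltonian_periodic.int_mul_eq s).trans
    (h.todaHamiltonian_periodic.int_mul_eq t).symm

theorem todaDualHamiltonian_eq (h : IsDiscreteToda r ξ) (s t : ℤ) :
    todaDualHamiltonian r ξ s = todaDualHamiltonian r ξ t := by
  simpa using (h.todaDualHamiltonian_periodic.int_mul_eq s).trans
    (h.todaDualHamiltonian_periodic.int_mul_eq t).symm

end IsDiscreteToda

end TodaLattice

section MiuraCoefficients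

theorem sum_powersetCard_eq_sum_erase {ι N : Type*} [DecidableEq ι] [AddCommMonoid N]
    {s : Finset ι} {n : ℕ} (hs : s.card = n + 1) (f : Finset ι → N) :
    ∑ T ∈ s.powersetCard n, f T = ∑ a ∈ s, f (s.erase a) := by
  have himage : s.image s.erase = s.powersetCard n := by
    refine Finset.eq_of_subset_of_card_le (Finset.image_subset_iff.mpr fun a ha ↦ ?_) ?_
    · simp [Finset.mem_powersetCard, Finset.erase_subset, Finset.card_erase_of_mem ha, hs]
    · rw [Finset.card_image_of_injOn s.erase_injOn, Finset.card_powersetCard, hs,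
        Nat.choose_succ_self_right]
  rw [← himage, Finset.sum_image s.erase_injOn]

theorem sum_Icc_one_eq_sum_range {N : Type*} [AddCommMonoid N] (f : ℕ → N) (n : ℕ) :
    ∑ α ∈ Finset.Icc 1 n, f α = ∑ k ∈ Finset.range n, f (k + 1) := by
  rw [Finset.range_eq_Ico, Finset.sum_Ico_add' f, zero_add, Finset.Ico_add_one_right_eq_Icc]

theorem sort_erase_Icc_one {r t : ℕ} (ht : t ≤ r) :
    ((Finset.Icc 1 (r + 1)).erase (t + 1)).sort (· ≤ ·) =
      List.range' 1 t ++ List.range' (t + 2) (r - t) := by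
  have hlt : (List.range' 1 t ++ List.range' (t + 2) (r - t)).Pairwise (· < ·) := by
    refine List.pairwise_append.mpr
      ⟨List.pairwise_lt_range', List.pairwise_lt_range', fun a ha b hb ↦ ?_⟩
    rw [List.mem_range'_1] at ha hb
    omega
  have hset : (Finset.Icc 1 (r + 1)).erase (t + 1) =
      (List.range' 1 t ++ List.range' (t + 2) (r - t)).toFinset := by
    ext a
    simp only [Finset.mem_erase, Finset.mem_Icc, List.mem_toFinset, List.mem_append,
      List.mem_range'_1]
    omega
  rw [hset]
  exact (List.toFinset_sort (· ≤ ·) (hlt.imp ne_of_lt)).mpr (hlt.imp le_of_lt)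

variable {R : Type*} [Ring R] {ξ : ℕ → ℤ → Rˣ}

-- Label plus position is constant along the list, so all factors sit at the same time.
theorem prod_zipIdx_reverse_range' {x : ℕ → ℤ → R} (a : ℕ) (c : ℤ) :
    ∀ k i : ℕ, (∀ b n, b < a + k → x (b + 1) n = ((ξ (b + 1) n)⁻¹ * ξ b n : Rˣ)) →
      (((List.range' (a + 1) k).reverse.zipIdx i).map fun p ↦ x p.1 (c - p.1 - p.2)).prod =
        ((ξ (a + k) (c - (a + k) - i))⁻¹ * ξ a (c - (a + k) - i) : Rˣ)
  | 0, _, _ => by simp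
  | k + 1, i, hx => by
    have htime : c - (a + k) - ((i + 1 : ℕ) : ℤ) = c - (a + (k + 1 : ℕ)) - i := by
      push_cast
      ring
    have htime' : c - ((a + k + 1 : ℕ) : ℤ) - i = c - (a + (k + 1 : ℕ)) - i := by
      push_cast
      ring
    rw [List.range'_concat, List.reverse_concat, List.zipIdx_cons, List.map_cons, List.prod_cons,
      prod_zipIdx_reverse_range' a c k (i + 1) fun b n hb ↦ hx b n (by omega), one_mul,
      show a + 1 + k = a + k + 1 by omega, hx _ _ (by omega), htime, htime', ← Units.val_mul,
      ← add_assoc a k 1]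
    congr 1
    group

variable {M Mi : ℕ → ℤ → R} {r : ℕ}

theorem CMiura_one
    (hx : ∀ k n, k ≤ r → xv M Mi (k + 1) n = ((ξ (k + 1) n)⁻¹ * ξ k n : Rˣ)) (n : ℤ) :
    CMiura M Mi r 1 n = todaHamiltonian r ξ (n + r) := by
  rw [CMiura, Finset.powersetCard_one, Finset.sum_map, sum_Icc_one_eq_sum_range, todaHamiltonian]
  refine Finset.sum_congr rfl fun k hk ↦ ?_
  have htime : n + ((r : ℤ) + 1 - (k + 1 : ℕ)) - (0 : ℕ) = n + r - k := by
    push_cast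
    ring
  simp only [Function.Embedding.coeFn_mk, Finset.sort_singleton, List.reverse_singleton,
    List.zipIdx_singleton, List.map_singleton, List.prod_singleton, htime,
    hx k _ (Finset.mem_range_succ_iff.mp hk)]

theorem prod_CMiura_erase {t : ℕ} (ht : t ≤ r)
    (hx : ∀ k n, k ≤ r → xv M Mi (k + 1) n = ((ξ (k + 1) n)⁻¹ * ξ k n : Rˣ)) (n : ℤ) :
    (((((Finset.Icc 1 (r + 1)).erase (t + 1)).sort (· ≤ ·)).reverse.zipIdx).map fun p ↦
        xv M Mi p.1 (n + ((r : ℤ) + 1 - p.1) - p.2)).prod =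
      (((ξ (r + 1) n)⁻¹ * (ξ (t + 1) n * (ξ t (n + 1))⁻¹) * ξ 0 (n + 1) : Rˣ) : R) := by
  have hupper := prod_zipIdx_reverse_range' (t + 1) (n + (r + 1)) (r - t) 0
    fun b m hb ↦ hx b m (by omega)
  have hlower := prod_zipIdx_reverse_range' 0 (n + (r + 1)) t (r - t)
    fun b m hb ↦ hx b m (by omega)
  rw [show n + ((r : ℤ) + 1) - (((t + 1 : ℕ) : ℤ) + (r - t : ℕ)) - (0 : ℕ) = n by omega,
    show t + 1 + (r - t) = r + 1 by omega] at hupper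
  rw [show n + ((r : ℤ) + 1) - (((0 : ℕ) : ℤ) + t) - (r - t : ℕ) = n + 1 by omega,
    zero_add, zero_add] at hlower
  simp only [← add_sub_assoc] at hupper hlower ⊢
  rw [sort_erase_Icc_one ht, List.reverse_append, List.zipIdx_append, List.map_append,
    List.prod_append, List.length_reverse, List.length_range', zero_add, hupper, hlower,
    ← Units.val_mul]
  congr 1
  group

theorem CMiura_self
    (hx : ∀ k n, k ≤ r → xv M Mi (k + 1) n = ((ξ (k + 1) n)⁻¹ * ξ k n : Rˣ)) (n : ℤ) :
    CMiura M Mi r r n = ↑(ξ (r + 1) n)⁻¹ * todaDualHamiltonian r ξ n * ξ 0 (n + 1) := by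
  rw [CMiura, sum_powersetCard_eq_sum_erase (by simp), sum_Icc_one_eq_sum_range,
    todaDualHamiltonian, Finset.mul_sum, Finset.sum_mul]
  refine Finset.sum_congr rfl fun t ht ↦ ?_
  rw [prod_CMiura_erase (Finset.mem_range_succ_iff.mp ht) hx, Units.val_mul, Units.val_mul]

end MiuraCoefficients

section QuantumMSystem

variable {R : Type*} [Ring R] {q A Δ : Rˣ} {r : ℕ} {m : ℕ → ℤ → Rˣ}

/-- The ratio `ξ_{α,n} = M_{α,n} M_{α,n+1}⁻¹` for a family of units. -/
def unitXi (m : ℕ → ℤ → Rˣ) (α : ℕ) (n : ℤ) : Rˣ :=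
  m α n * (m α (n + 1))⁻¹

/-- The quantum M-system for a family `m` of units, of which only the rows `0, …, r + 1` matter.
Row `r + 2` vanishes and so cannot be part of a family of units; the M-system equation of row
`r + 1` is replaced by the explicit form of that row. The equations of rows `1, …, r` are indexed
by `k + 1` with `k < r`. -/
structure IsQuantumMSystem (q A Δ : Rˣ) (r : ℕ) (m : ℕ → ℤ → Rˣ) : Prop where
  central : q ∈ Subgroup.center Rˣ
  bottom : ∀ n, m 0 n = 1
  top : ∀ n, m (r + 1) n = A ^ n * Δ
  exchange : ∀ k n, k < r →
    (q : R) ^ (k + 1) * m (k + 1) (n + 1) * m (k + 1) (n - 1) =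
      (m (k + 1) n : R) ^ 2 - m (k + 2) n * m k n
  qCommute : ∀ α β n p, α ≤ r + 1 → β ≤ r + 1 → |p| ≤ |(β : ℤ) - α| + 1 →
    QCommute q (p * (min α β : ℕ)) (m α n) (m β (n + p))

theorem sum_range_succ_mul_sub_mul_sum {f : ℕ → R} {g : R}
    (hcomm : ∀ k < r, Commute g (f (k + 1))) :
    (∑ k ∈ Finset.range (r + 1), f k) * g - g * ∑ k ∈ Finset.range (r + 1), f k =
      f 0 * g - g * f 0 := by
  have htail : Commute g (∑ k ∈ Finset.range r, f (k + 1)) :=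
    Commute.sum_right _ _ _ fun k hk ↦ hcomm k (Finset.mem_range.mp hk)
  rw [Finset.sum_range_succ', add_mul, mul_add, htail.eq]
  abel

theorem val_mul_inv_sub_of_exchange {a a' f b c : Rˣ} {k : ℕ} (hq : q ∈ Subgroup.center Rˣ)
    (haa' : QCommute q k a a') (hba' : QCommute q k b a')
    (hexch : (q : R) ^ k * a' * f = (a : R) ^ 2 - b * c) :
    ((a * a'⁻¹ : Rˣ) : R) - (f * a⁻¹ : Rˣ) = (b * a'⁻¹ * c * a⁻¹ : Rˣ) := by
  have hcentral : a' * q ^ k = q ^ k * a' := Subgroup.mem_center_iff.mp (pow_mem hq k) a'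
  have haa'_inv : a * a'⁻¹ = q ^ (-k : ℤ) * a'⁻¹ * a := haa'.inv_right hq
  have hba'_inv : b * a'⁻¹ = q ^ (-k : ℤ) * a'⁻¹ * b := hba'.inv_right hq
  have hscale : (q ^ k * a')⁻¹ = q ^ (-k : ℤ) * a'⁻¹ := by
    rw [← hcentral, mul_inv_rev, zpow_neg, zpow_natCast]
  have hf : (f : R) = ↑(q ^ (-k : ℤ) * a'⁻¹) * ((a : R) ^ 2 - b * c) := by
    rw [← hscale, Units.eq_inv_mul_iff_mul_eq, Units.val_mul, Units.val_pow_eq_pow_val, hexch]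
  rw [haa'_inv, hba'_inv, Units.val_mul f, hf]
  push_cast
  simp only [mul_sub, sub_mul, mul_assoc, pow_two, Units.mul_inv, mul_one]
  abel

theorem val_mul_inv_sub_of_exchange_succ {a a' a'' b' c' : Rˣ} {k : ℕ}
    (hq : q ∈ Subgroup.center Rˣ) (haa' : QCommute q k a a')
    (hexch : (q : R) ^ k * a'' * a = (a' : R) ^ 2 - b' * c') :
    ((a' * a⁻¹ : Rˣ) : R) - (a'' * a'⁻¹ : Rˣ) = (b' * c' * a'⁻¹ * a⁻¹ : Rˣ) := by
  have hcentral : a'' * q ^ k = q ^ k * a'' := Subgroup.mem_center_iff.mp (pow_mem hq k) a''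
  have haa'_inv : a * a'⁻¹ = q ^ (-k : ℤ) * a'⁻¹ * a := haa'.inv_right hq
  have hlast : a'' * a'⁻¹ = q ^ k * a'' * a * (a'⁻¹ * a⁻¹) := by
    rw [← hcentral, ← mul_assoc, mul_assoc _ a, haa'_inv]
    group
  rw [hlast, Units.val_mul _ (a'⁻¹ * a⁻¹)]
  push_cast
  rw [hexch]
  simp only [sub_mul, mul_assoc, pow_two, Units.mul_inv_cancel_left]
  abel

namespace IsQuantumMSystem

theorem commute (h : IsQuantumMSystem q A Δ r m) {α β : ℕ} (hα : α ≤ r + 1) (hβ : β ≤ r + 1)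
    (n : ℤ) : Commute (m α n) (m β n) := by
  have hcomm := h.qCommute α β n 0 hα hβ (by positivity)
  rw [zero_mul, add_zero] at hcomm
  exact hcomm.commute

theorem qCommute_succ (h : IsQuantumMSystem q A Δ r m) {α β : ℕ} (hα : α ≤ r + 1)
    (hβ : β ≤ r + 1) (n : ℤ) : QCommute q (min α β : ℕ) (m α n) (m β (n + 1)) := by
  simpa only [one_mul] using h.qCommute α β n 1 hα hβ (by simp)

theorem unitXi_zero (h : IsQuantumMSystem q A Δ r m) (n : ℤ) : unitXi m 0 n = 1 := by
  simp [unitXi, h.bottom]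

theorem unitXi_top (h : IsQuantumMSystem q A Δ r m) (n : ℤ) : unitXi m (r + 1) n = A⁻¹ := by
  rw [unitXi, h.top, h.top]
  group

theorem unitXi_sub_unitXi_pred (h : IsQuantumMSystem q A Δ r m) {k : ℕ} (hk : k < r) (n : ℤ) :
    (unitXi m (k + 1) n : R) - unitXi m (k + 1) (n - 1) =
      (m (k + 2) n * (m (k + 1) (n + 1))⁻¹ * m k n * (m (k + 1) n)⁻¹ : Rˣ) := by
  have hrow := h.qCommute_succ (α := k + 1) (β := k + 1) (by omega) (by omega) n
  have hrow' := h.qCommute_succ (α := k + 2) (β := k + 1) (by omega) (by omega) n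
  rw [min_self] at hrow
  rw [min_eq_right (by omega)] at hrow'
  rw [unitXi, unitXi, sub_add_cancel]
  exact val_mul_inv_sub_of_exchange h.central hrow hrow' (h.exchange k n hk)

theorem unitXi_inv_sub_unitXi_inv_succ (h : IsQuantumMSystem q A Δ r m) {k : ℕ} (hk : k < r)
    (n : ℤ) :
    (↑(unitXi m (k + 1) n)⁻¹ : R) - ↑(unitXi m (k + 1) (n + 1))⁻¹ =
      (m (k + 2) (n + 1) * m k (n + 1) * (m (k + 1) (n + 1))⁻¹ * (m (k + 1) n)⁻¹ : Rˣ) := by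
  have hrow := h.qCommute_succ (α := k + 1) (β := k + 1) (by omega) (by omega) n
  have hexch := h.exchange k (n + 1) hk
  rw [min_self] at hrow
  rw [add_sub_cancel_right] at hexch
  simp only [unitXi, mul_inv_rev, inv_inv]
  exact val_mul_inv_sub_of_exchange_succ h.central hrow hexch

theorem mul_inv_mul_unitXi_inv (h : IsQuantumMSystem q A Δ r m) {k : ℕ} (hk : k < r) (n : ℤ) :
    m k n * (m (k + 1) n)⁻¹ * (unitXi m k n)⁻¹ = m k (n + 1) * (m (k + 1) n)⁻¹ := by
  have hrow := h.qCommute_succ (α := k) (β := k) (by omega) (by omega) n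
  have hrow' := h.qCommute_succ (α := k + 1) (β := k) (by omega) (by omega) n
  rw [min_self] at hrow
  rw [min_eq_right (by omega)] at hrow'
  have hcomm := (h.commute (α := k) (β := k + 1) (by omega) (by omega) n).inv_right
  have hquot : QCommute q 0 (m k (n + 1)) (m k n * (m (k + 1) n)⁻¹) := by
    simpa using hrow.symm.mul_right h.central (hrow'.symm.inv_right h.central)
  calc m k n * (m (k + 1) n)⁻¹ * (unitXi m k n)⁻¹
      = m k n * (m (k + 1) n)⁻¹ * m k (n + 1) * (m k n)⁻¹ := by rw [unitXi]; group
    _ = m k (n + 1) * (m k n * (m (k + 1) n)⁻¹) * (m k n)⁻¹ := by rw [hquot.commute.eq]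
    _ = m k (n + 1) * (m (k + 1) n)⁻¹ := by rw [hcomm.eq]; group

theorem isDiscreteToda (h : IsQuantumMSystem q A Δ r m) : IsDiscreteToda r (unitXi m) where
  bottom _ _ := by rw [h.unitXi_zero, h.unitXi_zero]
  top _ _ := by rw [h.unitXi_top, h.unitXi_top]
  toda k n hk := by
    have hcomm := (h.commute (α := k) (β := k + 1) (by omega) (by omega) (n + 1)).inv_right
    rw [h.unitXi_sub_unitXi_pred hk, h.unitXi_inv_sub_unitXi_inv_succ hk, ← Units.val_mul,
      ← Units.val_mul, mul_assoc _ (m k n), mul_assoc, h.mul_inv_mul_unitXi_inv hk,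
      mul_assoc _ (m k (n + 1)), hcomm.eq, unitXi]
    congr 1
    group

theorem qCommute_one (h : IsQuantumMSystem q A Δ r m) {β : ℕ} {n k : ℤ} (hβ : 1 ≤ β)
    (hβr : β ≤ r + 1) (hlow : n - β ≤ k) (hhigh : k ≤ n + β) :
    QCommute q (k - n) (m 1 n) (m β k) := by
  have hbound : |k - n| ≤ |(β : ℤ) - (1 : ℕ)| + 1 := by
    rw [abs_of_nonneg (by omega : 0 ≤ (β : ℤ) - (1 : ℕ)), abs_le]
    omega
  simpa [min_eq_left hβ] using h.qCommute 1 β n (k - n) (by omega) hβr hbound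

theorem qCommute_one_unitXi (h : IsQuantumMSystem q A Δ r m) {β : ℕ} {n k : ℤ} (hβ : 1 ≤ β)
    (hβr : β ≤ r + 1) (hlow : n - β ≤ k) (hhigh : k + 1 ≤ n + β) :
    QCommute q (-1) (m 1 n) (unitXi m β k) := by
  have hquot := (h.qCommute_one hβ hβr hlow (by omega)).mul_right h.central
    ((h.qCommute_one hβ hβr (by omega) hhigh).inv_right h.central)
  rwa [show k - n + -(k + 1 - n) = -1 by ring] at hquot

theorem todaHamiltonian_mul_sub (h : IsQuantumMSystem q A Δ r m) (s n : ℤ) :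
    todaHamiltonian r (unitXi m) s * m 1 n - m 1 n * todaHamiltonian r (unitXi m) s =
      (1 - (q : R)) * m 1 (n + 1) := by
  have htail : ∀ k < r, Commute (m 1 n : R)
      ((unitXi m (k + 1 + 1) (n - (k + 1 : ℕ)))⁻¹ * unitXi m (k + 1) (n - (k + 1 : ℕ)) : Rˣ) := by
    intro k hk
    have hupper : QCommute q (-1) (m 1 n) (unitXi m (k + 1 + 1) (n - (k + 1 : ℕ))) :=
      h.qCommute_one_unitXi (by omega) (by omega) (by omega) (by omega)
    have hlower : QCommute q (-1) (m 1 n) (unitXi m (k + 1) (n - (k + 1 : ℕ))) :=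
      h.qCommute_one_unitXi (by omega) (by omega) (by omega) (by omega)
    exact ((hupper.inv_right h.central).mul_right h.central hlower).commute.units_val
  have hstep : m 1 n * m 1 (n + 1) = q * m 1 (n + 1) * m 1 n := by
    simpa [QCommute, SemiconjBy] using h.qCommute_succ (α := 1) (β := 1) (by omega) (by omega) n
  rw [h.isDiscreteToda.todaHamiltonian_eq s n, todaHamiltonian,
    sum_range_succ_mul_sub_mul_sum htail, ← Units.val_mul, ← Units.val_mul, sub_mul, one_mul,
    ← Units.val_mul]
  simp [unitXi, h.bottom, ← mul_assoc, hstep]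

theorem todaDualHamiltonian_mul_sub (h : IsQuantumMSystem q A Δ r m) (s n : ℤ) :
    todaDualHamiltonian r (unitXi m) s * m 1 n - m 1 n * todaDualHamiltonian r (unitXi m) s =
      (1 - ((q⁻¹ : Rˣ) : R)) * m 1 (n - 1) := by
  have htail : ∀ k < r, Commute (m 1 n : R)
      (unitXi m (k + 1 + 1) (n - 1) * (unitXi m (k + 1) (n - 1 + 1))⁻¹ : Rˣ) := by
    intro k hk
    have hupper : QCommute q (-1) (m 1 n) (unitXi m (k + 1 + 1) (n - 1)) :=
      h.qCommute_one_unitXi (by omega) (by omega) (by omega) (by omega)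
    have hlower : QCommute q (-1) (m 1 n) (unitXi m (k + 1) (n - 1 + 1)) :=
      h.qCommute_one_unitXi (by omega) (by omega) (by omega) (by omega)
    exact (hupper.mul_right h.central (hlower.inv_right h.central)).commute.units_val
  have hstep : m 1 n * m 1 (n - 1) = q⁻¹ * m 1 (n - 1) * m 1 n := by
    simpa [QCommute, SemiconjBy] using
      h.qCommute_one (β := 1) (n := n) (k := n - 1) le_rfl (by omega) (by simp) (by omega)
  rw [h.isDiscreteToda.todaDualHamiltonian_eq s (n - 1), todaDualHamiltonian,
    sum_range_succ_mul_sub_mul_sum htail, ← Units.val_mul, ← Units.val_mul, sub_mul, one_mul,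
    ← Units.val_mul]
  simp [unitXi, h.bottom, ← mul_assoc, hstep]

end IsQuantumMSystem

theorem exists_units_of_mul_eq_one {ι κ : Type*} {p : ι → Prop} {M Mi : ι → κ → R}
    (hL : ∀ i n, p i → M i n * Mi i n = 1) (hR : ∀ i n, p i → Mi i n * M i n = 1) :
    ∃ m : ι → κ → Rˣ, ∀ i n, p i → (m i n : R) = M i n ∧ (↑(m i n)⁻¹ : R) = Mi i n := by
  classical
  exact ⟨fun i n ↦ if h : p i then ⟨M i n, Mi i n, hL i n h, hR i n h⟩ else 1,
    fun i n h ↦ by simp [h]⟩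

theorem xv_eq_unitXi {M Mi : ℕ → ℤ → R}
    (hm : ∀ α n, α ≤ r + 1 → (m α n : R) = M α n ∧ (↑(m α n)⁻¹ : R) = Mi α n)
    (k : ℕ) (n : ℤ) (hk : k ≤ r) :
    xv M Mi (k + 1) n = ((unitXi m (k + 1) n)⁻¹ * unitXi m k n : Rˣ) := by
  have hrow n := hm (k + 1) n (by omega)
  have hrow' n := hm k n (by omega)
  simp [xv, xiv, xivInv, unitXi, ← (hrow _).1, ← (hrow _).2, ← (hrow' _).1, ← (hrow' _).2]

end QuantumMSystem

theorem quantum_Q_time_shifts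
    {R : Type*} [Ring R] (q A Δ : Rˣ)
    (hq : ∀ x : R, (q : R) * x = x * (q : R))
    (r : ℕ) (hr : 1 ≤ r)
    (M Mi : ℕ → ℤ → R)
    (hM0 : ∀ n : ℤ, M 0 n = 1)
    (hMtop : ∀ n : ℤ, M (r + 2) n = 0)
    (hMiL : ∀ (α : ℕ) (n : ℤ), α ≤ r + 1 → M α n * Mi α n = 1)
    (hMiR : ∀ (α : ℕ) (n : ℤ), α ≤ r + 1 → Mi α n * M α n = 1)
    (hMsys : ∀ (α : ℕ) (n : ℤ), 1 ≤ α → α ≤ r + 1 →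
      (q : R) ^ α * M α (n + 1) * M α (n - 1) = M α n ^ 2 - M (α + 1) n * M (α - 1) n)
    (hcom : ∀ (α β ε : ℕ) (n : ℤ), ε ≤ 1 → α ≤ r + 1 → β ≤ r + 1 →
      M α n * M β (n + (ε : ℤ)) = (q : R) ^ (ε * min α β) * M β (n + (ε : ℤ)) * M α n)
    (hAΔ : ∀ n : ℤ, M (r + 1) n = ((A ^ n : Rˣ) : R) * (Δ : R))
    (hΔM : ∀ (α : ℕ) (n : ℤ), 1 ≤ α → α ≤ r + 1 →
      (Δ : R) * M α n = ((q ^ ((α : ℤ) * n) : Rˣ) : R) * M α n * (Δ : R))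
    (hAM : ∀ (α : ℕ) (n : ℤ), 1 ≤ α → α ≤ r + 1 →
      (A : R) * M α n = ((q ^ (-(α : ℤ)) : Rˣ) : R) * M α n * (A : R))
    (hΔA : (Δ : R) * (A : R) = (q : R) ^ (r + 1) * (A : R) * (Δ : R))
    (hext : ∀ (α β : ℕ) (n p : ℤ), α ≤ r + 1 → β ≤ r + 1 →
      |p| ≤ |(β : ℤ) - (α : ℤ)| + 1 →
      M α n * M β (n + p) = ((q ^ (p * ((min α β : ℕ) : ℤ)) : Rˣ) : R) * M β (n + p) * M α n) :
    ∀ n : ℤ,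
      (CMiura M Mi r 1 0 * M 1 n - M 1 n * CMiura M Mi r 1 0 = (1 - (q : R)) * M 1 (n + 1))
      ∧ (((A⁻¹ : Rˣ) : R) * CMiura M Mi r r 0 * M 1 n
            - M 1 n * (((A⁻¹ : Rˣ) : R) * CMiura M Mi r r 0)
          = (1 - ((q⁻¹ : Rˣ) : R)) * M 1 (n - 1)) := by
  obtain ⟨m, hm⟩ := exists_units_of_mul_eq_one hMiL hMiR
  have hval : ∀ α n, α ≤ r + 1 → M α n = m α n := fun α n hα ↦ (hm α n hα).1.symm
  have hsys : IsQuantumMSystem q A Δ r m :=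
    { central := Subgroup.mem_center_iff.mpr fun x ↦ Units.ext (hq x).symm
      bottom := fun n ↦ Units.ext (by rw [← hval 0 n (by omega), hM0, Units.val_one])
      top := fun n ↦ Units.ext (by rw [← hval _ n le_rfl, hAΔ, Units.val_mul])
      exchange := fun k n hk ↦ by
        simpa only [hval (k + 1) _ (by omega), hval (k + 1 + 1) _ (by omega),
          hval k _ (by omega), Nat.add_sub_cancel] using hMsys (k + 1) n (by omega) (by omega)
      qCommute := fun α β n p hα hβ hp ↦ Units.ext (by
        simpa only [Units.val_mul, hval α _ hα, hval β _ hβ] using hext α β n p hα hβ hp) }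
  have hxv := xv_eq_unitXi hm
  have hC₁ : CMiura M Mi r 1 0 = todaHamiltonian r (unitXi m) r := by
    rw [CMiura_one hxv, zero_add]
  have hCᵣ : (↑A⁻¹ : R) * CMiura M Mi r r 0 = todaDualHamiltonian r (unitXi m) 0 := by
    rw [CMiura_self hxv, hsys.unitXi_top, hsys.unitXi_zero, inv_inv, Units.val_one, mul_one,
      Units.inv_mul_cancel_left]
  intro n
  rw [hC₁, hCᵣ, hval 1 _ (by omega), hval 1 _ (by omega), hval 1 _ (by omega)]
  exact ⟨hsys.todaHamiltonian_mul_sub _ n, hsys.todaDualHamiltonian_mul_sub _ n⟩
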